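/- Let h ∈ W̃_p with |{h > 0}| > 0, and let v be a bounded eigenfunction of the fractional p-Laplacian eigenvalue problem with eigenvalue λ such that v > 0 a.e. in Ω and ∫_Ω h(x) v(x)^p dx > 0. Then λ = λ₁, the first eigenvalue. -/

import Mathlib

open MeasureTheory Metric Set Filter

noncomputable section

/-- The Gagliardo `p`-energy `‖u‖^p = ∫∫ |u(x)-u(y)|^p / |x-y|^{N+sp} dx dy`. -/
def gagE (N : ℕ) (s p : ℝ) (u : EuclideanSpace ℝ (Fin N) → ℝ) : ℝ :=
  ∫ x, ∫ y, |u x - u y| ^ p / ‖x - y‖ ^ ((N : ℝ) + s * p)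

/-- The Gagliardo norm of `W₀^{s,p}`. -/
def gagNorm (N : ℕ) (s p : ℝ) (u : EuclideanSpace ℝ (Fin N) → ℝ) : ℝ :=
  gagE N s p u ^ (1 / p)

/-- Membership in `W₀^{s,p}(Ω)`: measurable, finite Gagliardo energy, vanishing outside `Ω`. -/
def memW0 (N : ℕ) (s p : ℝ) (Ω : Set (EuclideanSpace ℝ (Fin N)))
    (u : EuclideanSpace ℝ (Fin N) → ℝ) : Prop :=
  Measurable u ∧
  Integrable (fun z : EuclideanSpace ℝ (Fin N) × EuclideanSpace ℝ (Fin N) =>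
    |u z.1 - u z.2| ^ p / ‖z.1 - z.2‖ ^ ((N : ℝ) + s * p)) ∧
  ∀ x, x ∉ Ω → u x = 0

/-- The fractional `p`-Laplacian pairing `⟨A u, v⟩`. -/
def fracPair (N : ℕ) (s p : ℝ) (u v : EuclideanSpace ℝ (Fin N) → ℝ) : ℝ :=
  ∫ x, ∫ y, |u x - u y| ^ (p - 2) * (u x - u y) * (v x - v y) / ‖x - y‖ ^ ((N : ℝ) + s * p)

/-- `q` is below the critical exponent `p*ₛ = Np/(N-sp)` (`= ∞` if `sp ≥ N`). -/
def subCrit (N : ℕ) (s p q : ℝ) : Prop :=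
  s * p < N → q < N * p / ((N : ℝ) - s * p)

/-- The class `W_q`: `h ρ^{sa} ∈ L^r(Ω)` for some `a ∈ [0,q)`, `r ∈ (1,∞)` with
`1/r + a/p + (q-a)/p*ₛ < 1` (the last term read as `0` when `p*ₛ = ∞`). -/
def inWq (N : ℕ) (Ω : Set (EuclideanSpace ℝ (Fin N))) (s p q : ℝ)
    (h : EuclideanSpace ℝ (Fin N) → ℝ) : Prop :=
  ∃ a r : ℝ, 0 ≤ a ∧ a < q ∧ 1 < r ∧
    ((s * p < N ∧ 1 / r + a / p + (q - a) * ((N : ℝ) - s * p) / ((N : ℝ) * p) < 1) ∨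
      (¬ s * p < N ∧ 1 / r + a / p < 1)) ∧
    IntegrableOn (fun x => |h x * infDist x (frontier Ω) ^ (s * a)| ^ r) Ω

/-- The class `W̃_q`: `h ρ^{sa} ∈ L^r(Ω)` for some `a ∈ [0,1]`, `r ∈ (1,∞)` with
`1/r + a/p + (max{p,q}-a)/p*ₛ < 1`. -/
def inWtq (N : ℕ) (Ω : Set (EuclideanSpace ℝ (Fin N))) (s p q : ℝ)
    (h : EuclideanSpace ℝ (Fin N) → ℝ) : Prop :=
  ∃ a r : ℝ, 0 ≤ a ∧ a ≤ 1 ∧ 1 < r ∧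
    ((s * p < N ∧
        1 / r + a / p + (max p q - a) * ((N : ℝ) - s * p) / ((N : ℝ) * p) < 1) ∨
      (¬ s * p < N ∧ 1 / r + a / p < 1)) ∧
    IntegrableOn (fun x => |h x * infDist x (frontier Ω) ^ (s * a)| ^ r) Ω

/-- Weak convergence `uₙ ⇀ u` in `W₀^{s,p}(Ω)`: bounded Gagliardo norms together with
convergence against all continuous compactly supported test functions (a total family in
the dual `W^{-s,p'}(Ω)`). -/
def weakConv (N : ℕ) (s p : ℝ) (u_ : ℕ → EuclideanSpace ℝ (Fin N) → ℝ)
    (u : EuclideanSpace ℝ (Fin N) → ℝ) : Prop :=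
  (∃ M : ℝ, ∀ n, gagNorm N s p (u_ n) ≤ M) ∧
  ∀ φ : EuclideanSpace ℝ (Fin N) → ℝ, Continuous φ → HasCompactSupport φ →
    Tendsto (fun n => ∫ x, u_ n x * φ x) atTop (nhds (∫ x, u x * φ x))

/-- The first eigenvalue `λ₁ = inf{‖u‖^p : u ∈ W₀^{s,p}(Ω), ∫_Ω h|u|^p = 1}`. -/
def lam1 (N : ℕ) (s p : ℝ) (Ω : Set (EuclideanSpace ℝ (Fin N)))
    (h : EuclideanSpace ℝ (Fin N) → ℝ) : ℝ :=
  sInf {t : ℝ | ∃ u, memW0 N s p Ω u ∧ (∫ x in Ω, h x * |u x| ^ p) = 1 ∧ t = gagE N s p u}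

/-- `(λ, u)` is an eigenpair of `(-Δ)ₚˢ u = λ h |u|^{p-2} u` in `Ω`, `u = 0` outside `Ω`. -/
def isEigenpair (N : ℕ) (s p : ℝ) (Ω : Set (EuclideanSpace ℝ (Fin N)))
    (h : EuclideanSpace ℝ (Fin N) → ℝ) (lam : ℝ)
    (u : EuclideanSpace ℝ (Fin N) → ℝ) : Prop :=
  memW0 N s p Ω u ∧ ¬ (∀ᵐ x ∂volume.restrict Ω, u x = 0) ∧
  ∀ v, memW0 N s p Ω v →
    fracPair N s p u v = lam * ∫ x in Ω, h x * |u x| ^ (p - 2) * u x * v x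

/-!
Testing the equation for `v` with `v` itself and rescaling shows that `λ` is attained in the
variational problem defining `λ₁`. Conversely, `w ^ p / (|v| + ε) ^ (p - 1)` is an admissible test
function for every bounded nonnegative `w ∈ W₀^{s,p}(Ω)`, and Picone's inequality bounds the
resulting left-hand side by `‖w‖ ^ p`. Taking the truncations `w = min |u| n` of a competitor `u`
with `ε = 1 / (n + 1)` and letting `n → ∞` gives `λ ∫ h |u| ^ p ≤ ‖u‖ ^ p` by dominated convergence.
-/

section RealInequalities

variable {p a b c d : ℝ}

theorem rpow_sub_one_mul_self (hp : p ≠ 0) (ha : 0 ≤ a) : a ^ (p - 1) * a = a ^ p := by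
  rw [← Real.rpow_add_one' ha (by simpa using hp), sub_add_cancel]

theorem rpow_sub_two_mul_self (hp : p ≠ 1) (ha : 0 ≤ a) : a ^ (p - 2) * a = a ^ (p - 1) := by
  rw [← rpow_sub_one_mul_self (sub_ne_zero.2 hp) ha, sub_sub, one_add_one_eq_two]

theorem rpow_div_rpow_sub_one (hp : p ≠ 0) (ha : 0 < a) (hc : 0 ≤ c) :
    c ^ p / a ^ (p - 1) = a * (c / a) ^ p := by
  rw [Real.div_rpow hc ha.le, ← rpow_sub_one_mul_self hp ha.le]
  field_simp

-- `(c, a) ↦ c ^ p / a ^ (p - 1)` is the perspective of the convex function `c ↦ c ^ p`.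
theorem add_rpow_div_add_rpow_le (hp : 1 ≤ p) (hc : 0 ≤ c) (hd : 0 ≤ d) (ha : 0 < a)
    (hb : 0 < b) :
    (c + d) ^ p / (a + b) ^ (p - 1) ≤ c ^ p / a ^ (p - 1) + d ^ p / b ^ (p - 1) := by
  have hp0 : p ≠ 0 := by positivity
  have hconvex : (a / (a + b) * (c / a) + b / (a + b) * (d / b)) ^ p ≤
      a / (a + b) * (c / a) ^ p + b / (a + b) * (d / b) ^ p :=
    (convexOn_rpow hp).2 (div_nonneg hc ha.le) (div_nonneg hd hb.le) (by positivity)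
      (by positivity) (by field_simp)
  calc (c + d) ^ p / (a + b) ^ (p - 1)
      = (a + b) * (a / (a + b) * (c / a) + b / (a + b) * (d / b)) ^ p := by
        rw [rpow_div_rpow_sub_one hp0 (by positivity) (by positivity)]
        congr 2
        field_simp
    _ ≤ (a + b) * (a / (a + b) * (c / a) ^ p + b / (a + b) * (d / b) ^ p) := by gcongr
    _ = a * (c / a) ^ p + b * (d / b) ^ p := by field_simp
    _ = c ^ p / a ^ (p - 1) + d ^ p / b ^ (p - 1) := by
        rw [rpow_div_rpow_sub_one hp0 ha hc, rpow_div_rpow_sub_one hp0 hb hd]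

theorem discrete_picone_of_lt (hp : 1 ≤ p) (hb : 0 < b) (hba : b < a) (hc : 0 ≤ c) (hd : 0 ≤ d) :
    (a - b) ^ (p - 1) * (c ^ p / a ^ (p - 1) - d ^ p / b ^ (p - 1)) ≤ |c - d| ^ p := by
  have hab : 0 < a - b := sub_pos.2 hba
  have hcd : c ^ p / a ^ (p - 1) ≤ |c - d| ^ p / (a - b) ^ (p - 1) + d ^ p / b ^ (p - 1) :=
    calc c ^ p / a ^ (p - 1)
        ≤ (|c - d| + d) ^ p / a ^ (p - 1) := by
          have ha : 0 < a := hb.trans hba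
          gcongr
          linarith [le_abs_self (c - d)]
      _ = (|c - d| + d) ^ p / (a - b + b) ^ (p - 1) := by rw [sub_add_cancel]
      _ ≤ _ := add_rpow_div_add_rpow_le hp (abs_nonneg _) hd hab hb
  rw [← le_div_iff₀' (Real.rpow_pos_of_pos hab _)]
  linarith

theorem discrete_picone (hp : 1 < p) (ha : 0 < a) (hb : 0 < b) (hc : 0 ≤ c) (hd : 0 ≤ d) :
    |a - b| ^ (p - 2) * (a - b) * (c ^ p / a ^ (p - 1) - d ^ p / b ^ (p - 1)) ≤ |c - d| ^ p := by
  rcases lt_trichotomy a b with hab | rfl | hba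
  · have hpicone := discrete_picone_of_lt hp.le ha hab hd hc
    rw [← rpow_sub_two_mul_self hp.ne' (sub_nonneg.2 hab.le)] at hpicone
    rw [abs_sub_comm a b, abs_of_pos (sub_pos.2 hab), abs_sub_comm c d]
    linarith
  · rw [sub_self, mul_zero, zero_mul]
    positivity
  · rw [abs_of_pos (sub_pos.2 hba), rpow_sub_two_mul_self hp.ne' (sub_nonneg.2 hba.le)]
    exact discrete_picone_of_lt hp.le hb hba hc hd

theorem add_rpow_le_two_rpow_mul (hp : 1 ≤ p) (ha : 0 ≤ a) (hb : 0 ≤ b) :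
    (a + b) ^ p ≤ 2 ^ (p - 1) * (a ^ p + b ^ p) := by
  have h := add_rpow_div_add_rpow_le hp ha hb one_pos one_pos
  rwa [one_add_one_eq_two, Real.one_rpow, div_one, div_one,
    div_le_iff₀' (Real.rpow_pos_of_pos two_pos _)] at h

theorem rpow_sub_one_mul_le_rpow_add_rpow (hp : 1 ≤ p) (ha : 0 ≤ a) (hb : 0 ≤ b) :
    a ^ (p - 1) * b ≤ a ^ p + b ^ p := by
  have hp0 : p ≠ 0 := by positivity
  rcases le_total a b with hab | hba
  · calc a ^ (p - 1) * b ≤ b ^ (p - 1) * b := by gcongr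
      _ = b ^ p := rpow_sub_one_mul_self hp0 hb
      _ ≤ a ^ p + b ^ p := le_add_of_nonneg_left (Real.rpow_nonneg ha p)
  · calc a ^ (p - 1) * b ≤ a ^ (p - 1) * a := by gcongr
      _ = a ^ p := rpow_sub_one_mul_self hp0 ha
      _ ≤ a ^ p + b ^ p := le_add_of_nonneg_right (Real.rpow_nonneg hb p)

theorem abs_rpow_sub_two_mul_mul_le (hp : 1 < p) :
    |(|a| ^ (p - 2) * a * b)| ≤ |a| ^ p + |b| ^ p := by
  rw [abs_mul, abs_mul, abs_of_nonneg (Real.rpow_nonneg (abs_nonneg a) _),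
    rpow_sub_two_mul_self hp.ne' (abs_nonneg a)]
  exact rpow_sub_one_mul_le_rpow_add_rpow hp.le (abs_nonneg a) (abs_nonneg b)

theorem abs_rpow_sub_two_mul_self_mul_self (hp : 1 < p) :
    |a| ^ (p - 2) * a * a = |a| ^ p := by
  rw [mul_assoc, ← abs_mul_abs_self, ← mul_assoc, rpow_sub_two_mul_self hp.ne' (abs_nonneg a),
    rpow_sub_one_mul_self (by positivity) (abs_nonneg a)]

theorem abs_rpow_sub_rpow_le {k : ℝ} (hp : 1 ≤ p) (hc : c ∈ Icc 0 k) (hd : d ∈ Icc 0 k) :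
    |c ^ p - d ^ p| ≤ p * k ^ (p - 1) * |c - d| := by
  refine (convex_Icc 0 k).norm_image_sub_le_of_norm_hasDerivWithin_le
    (fun x _ ↦ (Real.hasDerivAt_rpow_const (Or.inr hp)).hasDerivWithinAt) (fun x hx ↦ ?_) hd hc
  have hx0 : 0 ≤ x := hx.1
  rw [Real.norm_of_nonneg (by positivity)]
  gcongr
  exact hx.2

theorem abs_rpow_neg_sub_rpow_neg_le {q ε : ℝ} (hq : 0 ≤ q) (hε : 0 < ε) (ha : ε ≤ a)
    (hb : ε ≤ b) : |a ^ (-q) - b ^ (-q)| ≤ q * ε ^ (-q - 1) * |a - b| := by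
  refine (convex_Ici ε).norm_image_sub_le_of_norm_hasDerivWithin_le
    (fun x hx ↦ (Real.hasDerivAt_rpow_const
      (Or.inl (hε.trans_le hx).ne')).hasDerivWithinAt) (fun x hx ↦ ?_) hb ha
  have hx0 : 0 < x := hε.trans_le hx
  rw [norm_mul, norm_neg, Real.norm_of_nonneg hq, Real.norm_of_nonneg (by positivity)]
  exact mul_le_mul_of_nonneg_left (Real.rpow_le_rpow_of_nonpos hε hx (by linarith)) hq

theorem abs_rpow_div_add_rpow_sub_le {k ε : ℝ} (hp : 1 ≤ p) (hε : 0 < ε) (ha : 0 ≤ a)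
    (hb : 0 ≤ b) (hc : c ∈ Icc 0 k) (hd : d ∈ Icc 0 k) :
    |c ^ p / (a + ε) ^ (p - 1) - d ^ p / (b + ε) ^ (p - 1)| ≤
      p * k ^ (p - 1) * ε ^ (-(p - 1)) * |c - d| +
        k ^ p * ((p - 1) * ε ^ (-(p - 1) - 1)) * |a - b| := by
  have hp1 : 0 ≤ p - 1 := sub_nonneg.2 hp
  have hk : 0 ≤ k := hc.1.trans hc.2
  have hd0 : 0 ≤ d := hd.1
  have hdk : d ^ p ≤ k ^ p := by
    gcongr
    exact hd.2
  have haε : (a + ε) ^ (-(p - 1)) ≤ ε ^ (-(p - 1)) :=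
    Real.rpow_le_rpow_of_nonpos hε (le_add_of_nonneg_left ha) (by linarith)
  have hnum := abs_rpow_sub_rpow_le hp hc hd
  have hden : |(a + ε) ^ (-(p - 1)) - (b + ε) ^ (-(p - 1))| ≤
      (p - 1) * ε ^ (-(p - 1) - 1) * |a - b| := by
    simpa only [add_sub_add_right_eq_sub] using
      abs_rpow_neg_sub_rpow_neg_le hp1 hε (le_add_of_nonneg_left ha) (le_add_of_nonneg_left hb)
  calc |c ^ p / (a + ε) ^ (p - 1) - d ^ p / (b + ε) ^ (p - 1)|
      = |(c ^ p - d ^ p) * (a + ε) ^ (-(p - 1)) +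
          d ^ p * ((a + ε) ^ (-(p - 1)) - (b + ε) ^ (-(p - 1)))| := by
        rw [div_eq_mul_inv, div_eq_mul_inv, ← Real.rpow_neg (by positivity),
          ← Real.rpow_neg (by positivity)]
        ring_nf
    _ ≤ |c ^ p - d ^ p| * (a + ε) ^ (-(p - 1)) +
          d ^ p * |(a + ε) ^ (-(p - 1)) - (b + ε) ^ (-(p - 1))| := by
        refine (abs_add_le _ _).trans_eq ?_
        rw [abs_mul, abs_mul, abs_of_nonneg (by positivity : 0 ≤ (a + ε) ^ (-(p - 1))),
          abs_of_nonneg (by positivity : 0 ≤ d ^ p)]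
    _ ≤ p * k ^ (p - 1) * |c - d| * ε ^ (-(p - 1)) +
          k ^ p * ((p - 1) * ε ^ (-(p - 1) - 1) * |a - b|) := by
        gcongr
    _ = _ := by ring

theorem abs_min_abs_sub_min_abs_le (k : ℝ) : |min |a| k - min |b| k| ≤ |a - b| :=
  calc |min |a| k - min |b| k| ≤ max |(|a| - |b|)| |k - k| := abs_min_sub_min_le_max _ _ _ _
    _ = |(|a| - |b|)| := by rw [sub_self, abs_zero, max_eq_left (abs_nonneg _)]
    _ ≤ |a - b| := abs_abs_sub_abs_le a b

end RealInequalities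

theorem aemeasurable_of_integrable_mul {α : Type*} [MeasurableSpace α] {μ : Measure α}
    {f g : α → ℝ} (hfg : Integrable (fun x ↦ f x * g x) μ) (hg : AEMeasurable g μ)
    (hg0 : ∀ᵐ x ∂μ, g x ≠ 0) : AEMeasurable f μ := by
  refine (hfg.aemeasurable.div hg).congr ?_
  filter_upwards [hg0] with x hx
  exact mul_div_cancel_right₀ (f x) hx

section Gagliardo

variable {N : ℕ} {s p : ℝ} {Ω : Set (EuclideanSpace ℝ (Fin N))}
  {u v : EuclideanSpace ℝ (Fin N) → ℝ}

/-- The integrand of the Gagliardo energy `gagE`, as a function on the product space. -/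
def gagDensity (N : ℕ) (s p : ℝ) (u : EuclideanSpace ℝ (Fin N) → ℝ)
    (z : EuclideanSpace ℝ (Fin N) × EuclideanSpace ℝ (Fin N)) : ℝ :=
  |u z.1 - u z.2| ^ p / ‖z.1 - z.2‖ ^ ((N : ℝ) + s * p)

/-- The integrand of the fractional `p`-Laplacian pairing `fracPair`, as a function on the product
space. -/
def fracDensity (N : ℕ) (s p : ℝ) (u v : EuclideanSpace ℝ (Fin N) → ℝ)
    (z : EuclideanSpace ℝ (Fin N) × EuclideanSpace ℝ (Fin N)) : ℝ :=
  |u z.1 - u z.2| ^ (p - 2) * (u z.1 - u z.2) * (v z.1 - v z.2) / ‖z.1 - z.2‖ ^ ((N : ℝ) + s * p)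

theorem gagDensity_nonneg (z : EuclideanSpace ℝ (Fin N) × EuclideanSpace ℝ (Fin N)) :
    0 ≤ gagDensity N s p u z := by
  unfold gagDensity
  positivity

theorem gagDensity_const_mul (c : ℝ)
    (z : EuclideanSpace ℝ (Fin N) × EuclideanSpace ℝ (Fin N)) :
    gagDensity N s p (fun x ↦ c * u x) z = |c| ^ p * gagDensity N s p u z := by
  simp only [gagDensity, ← mul_sub, abs_mul]
  rw [Real.mul_rpow (abs_nonneg _) (abs_nonneg _), mul_div_assoc]

theorem gagDensity_le_of_abs_sub_le (hp : 0 ≤ p)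
    {z : EuclideanSpace ℝ (Fin N) × EuclideanSpace ℝ (Fin N)}
    (huv : |u z.1 - u z.2| ≤ |v z.1 - v z.2|) :
    gagDensity N s p u z ≤ gagDensity N s p v z := by
  unfold gagDensity
  gcongr

theorem abs_fracDensity_le (hp : 1 < p)
    (z : EuclideanSpace ℝ (Fin N) × EuclideanSpace ℝ (Fin N)) :
    |fracDensity N s p u v z| ≤ gagDensity N s p u z + gagDensity N s p v z := by
  rw [fracDensity, gagDensity, gagDensity, ← add_div, abs_div,
    abs_of_nonneg (Real.rpow_nonneg (norm_nonneg _) _)]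
  gcongr
  exact abs_rpow_sub_two_mul_mul_le hp

theorem measurable_gagDensity (hu : Measurable u) : Measurable (gagDensity N s p u) := by
  unfold gagDensity
  fun_prop

theorem measurable_fracDensity (hu : Measurable u) (hv : Measurable v) :
    Measurable (fracDensity N s p u v) := by
  unfold fracDensity
  fun_prop

theorem fracPair_self (hp : 1 < p) : fracPair N s p u u = gagE N s p u := by
  simp only [fracPair, gagE, abs_rpow_sub_two_mul_self_mul_self hp]

theorem gagE_const_mul (c : ℝ) :
    gagE N s p (fun x ↦ c * u x) = |c| ^ p * gagE N s p u := by
  have hdensity (x y) := gagDensity_const_mul (s := s) (p := p) (u := u) c (x, y)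
  simp only [gagDensity] at hdensity
  simp only [gagE, hdensity, integral_const_mul]

namespace memW0

theorem measurable (hu : memW0 N s p Ω u) : Measurable u := hu.1

theorem integrable_gagDensity (hu : memW0 N s p Ω u) : Integrable (gagDensity N s p u) := hu.2.1

theorem eq_zero_of_notMem (hu : memW0 N s p Ω u) {x : EuclideanSpace ℝ (Fin N)} (hx : x ∉ Ω) :
    u x = 0 := hu.2.2 x hx

theorem ae_nonneg (hu : memW0 N s p Ω u) (hpos : ∀ᵐ x ∂volume.restrict Ω, 0 < u x) :
    ∀ᵐ x, 0 ≤ u x := by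
  filter_upwards [(ae_restrict_iff (measurableSet_lt measurable_const hu.measurable)).1 hpos]
    with x hx
  by_cases hxΩ : x ∈ Ω
  · exact (hx hxΩ).le
  · exact (hu.eq_zero_of_notMem hxΩ).ge

theorem gagE_eq_integral (hu : memW0 N s p Ω u) : gagE N s p u = ∫ z, gagDensity N s p u z :=
  (integral_prod _ hu.integrable_gagDensity).symm

theorem integrable_fracDensity (hp : 1 < p) (hu : memW0 N s p Ω u) (hv : memW0 N s p Ω v) :
    Integrable (fracDensity N s p u v) :=
  (hu.integrable_gagDensity.add hv.integrable_gagDensity).mono'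
    (measurable_fracDensity hu.measurable hv.measurable).aestronglyMeasurable
    (ae_of_all _ (abs_fracDensity_le hp))

theorem fracPair_eq_integral (hp : 1 < p) (hu : memW0 N s p Ω u) (hv : memW0 N s p Ω v) :
    fracPair N s p u v = ∫ z, fracDensity N s p u v z :=
  (integral_prod _ (integrable_fracDensity hp hu hv)).symm

theorem gagE_le_of_abs_sub_le (hp : 0 ≤ p) (hu : memW0 N s p Ω u) (hv : memW0 N s p Ω v)
    (huv : ∀ x y, |u x - u y| ≤ |v x - v y|) : gagE N s p u ≤ gagE N s p v := by
  rw [hu.gagE_eq_integral, hv.gagE_eq_integral]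
  exact integral_mono hu.integrable_gagDensity hv.integrable_gagDensity
    fun z ↦ gagDensity_le_of_abs_sub_le hp (huv z.1 z.2)

theorem const_mul (hu : memW0 N s p Ω u) (c : ℝ) : memW0 N s p Ω (fun x ↦ c * u x) := by
  refine ⟨hu.measurable.const_mul c, ?_,
    fun x hx ↦ mul_eq_zero_of_right c (hu.eq_zero_of_notMem hx)⟩
  exact (hu.integrable_gagDensity.const_mul (|c| ^ p)).congr
    (ae_of_all _ fun z ↦ (gagDensity_const_mul c z).symm)

theorem of_abs_sub_le (hp : 1 ≤ p) (hu : memW0 N s p Ω u) (hv : memW0 N s p Ω v)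
    {φ : EuclideanSpace ℝ (Fin N) → ℝ} (hφ : Measurable φ) (hφ0 : ∀ x, x ∉ Ω → φ x = 0)
    (hφuv : ∀ x y, |φ x - φ y| ≤ |u x - u y| + |v x - v y|) : memW0 N s p Ω φ := by
  refine ⟨hφ, ?_, hφ0⟩
  refine ((hu.integrable_gagDensity.add hv.integrable_gagDensity).const_mul (2 ^ (p - 1))).mono'
    (measurable_gagDensity hφ).aestronglyMeasurable (ae_of_all _ fun z ↦ ?_)
  have hpow : |φ z.1 - φ z.2| ^ p ≤
      2 ^ (p - 1) * (|u z.1 - u z.2| ^ p + |v z.1 - v z.2| ^ p) :=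
    (Real.rpow_le_rpow (abs_nonneg _) (hφuv z.1 z.2) (by positivity)).trans
      (add_rpow_le_two_rpow_mul hp (abs_nonneg _) (abs_nonneg _))
  calc ‖gagDensity N s p φ z‖ = gagDensity N s p φ z := Real.norm_of_nonneg (gagDensity_nonneg z)
    _ ≤ 2 ^ (p - 1) * (gagDensity N s p u z + gagDensity N s p v z) := by
      rw [gagDensity, gagDensity, gagDensity, ← add_div, ← mul_div_assoc]
      gcongr

theorem min_abs (hp : 1 ≤ p) (hu : memW0 N s p Ω u) {k : ℝ} (hk : 0 ≤ k) :
    memW0 N s p Ω (fun x ↦ min |u x| k) := by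
  refine of_abs_sub_le hp hu hu (hu.measurable.abs.min measurable_const) (fun x hx ↦ ?_)
    fun x y ↦ (abs_min_abs_sub_min_abs_le k).trans (le_add_of_nonneg_right (abs_nonneg _))
  rw [hu.eq_zero_of_notMem hx, abs_zero, min_eq_left hk]

end memW0

end Gagliardo

section PiconeQuotient

/-- The regularised Picone quotient `u ^ p / (|v| + ε) ^ (p - 1)`, the test function in Picone's
inequality. The absolute value keeps the denominator positive where `v` is negative. -/
def piconeQuotient {α : Type*} (p ε : ℝ) (u v : α → ℝ) (x : α) : ℝ :=
  u x ^ p / (|v x| + ε) ^ (p - 1)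

variable {α : Type*} {p : ℝ} {u v : α → ℝ}

theorem rpow_mul_piconeQuotient_le {ε : ℝ} {x : α} (hp : 1 ≤ p) (hε : 0 ≤ ε) (hu : 0 ≤ u x)
    (hv : 0 < v x) : v x ^ (p - 1) * piconeQuotient p ε u v x ≤ u x ^ p := by
  rw [piconeQuotient, abs_of_pos hv, ← mul_div_assoc, div_le_iff₀' (by positivity)]
  gcongr
  linarith

theorem tendsto_piconeQuotient_min {x : α} (hp : 0 ≤ p) (hv : v x ≠ 0) :
    Tendsto (fun n : ℕ ↦ piconeQuotient p (1 / ((n : ℝ) + 1)) (fun y ↦ min |u y| n) v x) atTop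
      (nhds (|u x| ^ p / |v x| ^ (p - 1))) := by
  have hnum : Tendsto (fun n : ℕ ↦ min |u x| (n : ℝ)) atTop (nhds |u x|) :=
    tendsto_const_nhds.congr' <|
      (tendsto_natCast_atTop_atTop.eventually_ge_atTop |u x|).mono fun n hn ↦ (min_eq_left hn).symm
  have hden : Tendsto (fun n : ℕ ↦ |v x| + 1 / ((n : ℝ) + 1)) atTop (nhds |v x|) := by
    simpa only [add_zero] using tendsto_one_div_add_atTop_nhds_zero_nat.const_add |v x|
  have hv' : |v x| ≠ 0 := abs_ne_zero.2 hv
  exact (hnum.rpow_const (Or.inr hp)).div (hden.rpow_const (Or.inl hv')) (by positivity)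

variable [MeasurableSpace α]

theorem measurable_piconeQuotient {ε : ℝ} (hu : Measurable u) (hv : Measurable v) :
    Measurable (piconeQuotient p ε u v) := by
  unfold piconeQuotient
  fun_prop

theorem aemeasurable_piconeQuotient {μ : Measure α} {ε : ℝ} (hu : AEMeasurable u μ)
    (hv : AEMeasurable v μ) : AEMeasurable (piconeQuotient p ε u v) μ := by
  unfold piconeQuotient
  fun_prop

theorem tendsto_integral_mul_piconeQuotient {μ : Measure α} {h : α → ℝ} (hp : 1 < p)
    (hh : AEMeasurable h μ) (hu : AEMeasurable u μ) (hv : AEMeasurable v μ)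
    (hvpos : ∀ᵐ x ∂μ, 0 < v x) (hint : Integrable (fun x ↦ h x * |u x| ^ p) μ) :
    Tendsto (fun n : ℕ ↦ ∫ x, h x * |v x| ^ (p - 2) * v x *
      piconeQuotient p (1 / ((n : ℝ) + 1)) (fun y ↦ min |u y| n) v x ∂μ) atTop
      (nhds (∫ x, h x * |u x| ^ p ∂μ)) := by
  have hv_pow {x} (hx : 0 < v x) : h x * |v x| ^ (p - 2) * v x = h x * v x ^ (p - 1) := by
    rw [mul_assoc, abs_of_pos hx, rpow_sub_two_mul_self hp.ne' hx.le]
  refine tendsto_integral_of_dominated_convergence (fun x ↦ ‖h x * |u x| ^ p‖) (fun n ↦ ?_)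
    hint.norm (fun n ↦ ?_) ?_
  · have hmin : AEMeasurable (fun x ↦ min |u x| n) μ := hu.abs.min aemeasurable_const
    have hφ := aemeasurable_piconeQuotient (p := p) (ε := 1 / ((n : ℝ) + 1)) hmin hv
    exact (((hh.mul (hv.abs.pow_const _)).mul hv).mul hφ).aestronglyMeasurable
  · filter_upwards [hvpos] with x hx
    have hmin : 0 ≤ min |u x| n := le_min (abs_nonneg _) n.cast_nonneg
    rw [hv_pow hx, mul_assoc, norm_mul, norm_mul (h x)]
    gcongr
    rw [Real.norm_of_nonneg (by unfold piconeQuotient; positivity),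
      Real.norm_of_nonneg (by positivity)]
    calc v x ^ (p - 1) * piconeQuotient p (1 / ((n : ℝ) + 1)) (fun y ↦ min |u y| n) v x
        ≤ min |u x| n ^ p := rpow_mul_piconeQuotient_le hp.le (by positivity) hmin hx
      _ ≤ |u x| ^ p := by
        gcongr
        exact min_le_left _ _
  · filter_upwards [hvpos] with x hx
    have hcancel : h x * v x ^ (p - 1) * (|u x| ^ p / |v x| ^ (p - 1)) = h x * |u x| ^ p := by
      rw [abs_of_pos hx, mul_assoc, mul_div_cancel₀ _ (by positivity)]
    rw [hv_pow hx, ← hcancel]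
    exact (tendsto_piconeQuotient_min (by positivity) hx.ne').const_mul _

end PiconeQuotient

section PiconeInequality

variable {N : ℕ} {s p : ℝ} {Ω : Set (EuclideanSpace ℝ (Fin N))}
  {u v : EuclideanSpace ℝ (Fin N) → ℝ}

theorem memW0_piconeQuotient (hp : 1 < p) {k ε : ℝ} (hε : 0 < ε) (hu : memW0 N s p Ω u)
    (hv : memW0 N s p Ω v) (huk : ∀ x, u x ∈ Icc 0 k) :
    memW0 N s p Ω (piconeQuotient p ε u v) := by
  have hk : 0 ≤ k := (huk 0).1.trans (huk 0).2
  set A := p * k ^ (p - 1) * ε ^ (-(p - 1))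
  set B := k ^ p * ((p - 1) * ε ^ (-(p - 1) - 1))
  have hA : 0 ≤ A := by positivity
  have hB : 0 ≤ B := by positivity
  refine memW0.of_abs_sub_le hp.le (hu.const_mul A) (hv.const_mul B)
    (measurable_piconeQuotient hu.measurable hv.measurable) (fun x hx ↦ ?_) fun x y ↦ ?_
  · rw [piconeQuotient, hu.eq_zero_of_notMem hx, Real.zero_rpow (by positivity), zero_div]
  · calc |piconeQuotient p ε u v x - piconeQuotient p ε u v y|
        ≤ A * |u x - u y| + B * |(|v x| - |v y|)| :=
          abs_rpow_div_add_rpow_sub_le hp.le hε (abs_nonneg _) (abs_nonneg _) (huk x) (huk y)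
      _ ≤ A * |u x - u y| + B * |v x - v y| := by
          have hvxy := abs_abs_sub_abs_le (v x) (v y)
          gcongr
      _ = |A * u x - A * u y| + |B * v x - B * v y| := by
          rw [← mul_sub, ← mul_sub, abs_mul A, abs_mul B, abs_of_nonneg hA, abs_of_nonneg hB]

theorem fracPair_piconeQuotient_le_gagE (hp : 1 < p) {ε : ℝ} (hε : 0 < ε)
    (hu : memW0 N s p Ω u) (hv : memW0 N s p Ω v)
    (hφ : memW0 N s p Ω (piconeQuotient p ε u v)) (hu0 : ∀ x, 0 ≤ u x) (hv0 : ∀ᵐ x, 0 ≤ v x) :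
    fracPair N s p v (piconeQuotient p ε u v) ≤ gagE N s p u := by
  rw [hv.fracPair_eq_integral hp hφ, hu.gagE_eq_integral]
  refine integral_mono_ae (hv.integrable_fracDensity hp hφ) hu.integrable_gagDensity ?_
  filter_upwards [Measure.quasiMeasurePreserving_fst.ae hv0,
    Measure.quasiMeasurePreserving_snd.ae hv0] with z hz₁ hz₂
  have hpicone := discrete_picone hp (add_pos_of_nonneg_of_pos hz₁ hε)
    (add_pos_of_nonneg_of_pos hz₂ hε) (hu0 z.1) (hu0 z.2)
  rw [add_sub_add_right_eq_sub] at hpicone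
  rw [fracDensity, gagDensity, piconeQuotient, piconeQuotient, abs_of_nonneg hz₁,
    abs_of_nonneg hz₂]
  gcongr

end PiconeInequality

section FirstEigenvalue

variable {N : ℕ} {s p lam : ℝ} {Ω : Set (EuclideanSpace ℝ (Fin N))}
  {h u v : EuclideanSpace ℝ (Fin N) → ℝ}

theorem memW0.exists_integral_eq_one (hp : p ≠ 0) (hu : memW0 N s p Ω u)
    (hint : 0 < ∫ x in Ω, h x * |u x| ^ p) :
    ∃ w, memW0 N s p Ω w ∧ (∫ x in Ω, h x * |w x| ^ p) = 1 ∧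
      gagE N s p w = gagE N s p u / ∫ x in Ω, h x * |u x| ^ p := by
  set I := ∫ x in Ω, h x * |u x| ^ p
  have hscale : |I⁻¹ ^ (1 / p)| ^ p = I⁻¹ := by
    rw [abs_of_pos (by positivity), ← Real.rpow_mul (by positivity), one_div_mul_cancel hp,
      Real.rpow_one]
  refine ⟨fun x ↦ I⁻¹ ^ (1 / p) * u x, hu.const_mul _, ?_, ?_⟩
  · simp only [abs_mul, Real.mul_rpow (abs_nonneg _) (abs_nonneg _), hscale, mul_left_comm _ I⁻¹]
    rw [integral_const_mul, inv_mul_cancel₀ hint.ne']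
  · rw [gagE_const_mul, hscale, inv_mul_eq_div]

theorem isEigenpair.gagE_eq (hp : 1 < p) (heig : isEigenpair N s p Ω h lam v) :
    gagE N s p v = lam * ∫ x in Ω, h x * |v x| ^ p := by
  rw [← fracPair_self hp, heig.2.2 v heig.1]
  simp only [mul_assoc, ← abs_rpow_sub_two_mul_self_mul_self hp]

theorem isEigenpair.mul_integral_le_gagE (hp : 1 < p) (heig : isEigenpair N s p Ω h lam v)
    (hvpos : ∀ᵐ x ∂volume.restrict Ω, 0 < v x) (hh : AEMeasurable h (volume.restrict Ω))
    (hu : memW0 N s p Ω u) (hint : IntegrableOn (fun x ↦ h x * |u x| ^ p) Ω) :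
    lam * ∫ x in Ω, h x * |u x| ^ p ≤ gagE N s p u := by
  have hv : memW0 N s p Ω v := heig.1
  have hlim := tendsto_integral_mul_piconeQuotient hp hh hu.measurable.aemeasurable
    hv.measurable.aemeasurable hvpos hint
  refine le_of_tendsto' (hlim.const_mul lam) fun n ↦ ?_
  set w : EuclideanSpace ℝ (Fin N) → ℝ := fun x ↦ min |u x| n
  have hw : memW0 N s p Ω w := hu.min_abs hp.le n.cast_nonneg
  have hwn (x) : w x ∈ Icc 0 (n : ℝ) :=
    ⟨le_min (abs_nonneg _) n.cast_nonneg, min_le_right _ _⟩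
  have hε : 0 < 1 / ((n : ℝ) + 1) := Nat.one_div_pos_of_nat
  have hφ := memW0_piconeQuotient hp hε hw hv hwn
  calc _ = fracPair N s p v (piconeQuotient p (1 / ((n : ℝ) + 1)) w v) := (heig.2.2 _ hφ).symm
    _ ≤ gagE N s p w :=
        fracPair_piconeQuotient_le_gagE hp hε hw hv hφ (fun x ↦ (hwn x).1) (hv.ae_nonneg hvpos)
    _ ≤ gagE N s p u :=
        hw.gagE_le_of_abs_sub_le (by positivity) hu fun _ _ ↦ abs_min_abs_sub_min_abs_le n

end FirstEigenvalue

theorem stmt11_general {N : ℕ} {Ω : Set (EuclideanSpace ℝ (Fin N))} {s p : ℝ} (hp : 1 < p)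
    {h : EuclideanSpace ℝ (Fin N) → ℝ} {lam : ℝ} {v : EuclideanSpace ℝ (Fin N) → ℝ}
    (heig : isEigenpair N s p Ω h lam v) (hvpos : ∀ᵐ x ∂volume.restrict Ω, 0 < v x)
    (hint : 0 < ∫ x in Ω, h x * v x ^ p) :
    lam = lam1 N s p Ω h := by
  have hh : AEMeasurable h (volume.restrict Ω) :=
    aemeasurable_of_integrable_mul (.of_integral_ne_zero hint.ne')
      (heig.1.measurable.pow_const p).aemeasurable
      (hvpos.mono fun x hx ↦ (Real.rpow_pos_of_pos hx p).ne')
  have hint_abs : (∫ x in Ω, h x * v x ^ p) = ∫ x in Ω, h x * |v x| ^ p :=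
    integral_congr_ae (hvpos.mono fun x hx ↦ by simp only [abs_of_pos hx])
  rw [hint_abs] at hint
  obtain ⟨w, hw, hw1, hwE⟩ := heig.1.exists_integral_eq_one (by positivity) hint
  rw [heig.gagE_eq hp, mul_div_cancel_right₀ _ hint.ne'] at hwE
  refine Eq.symm (IsLeast.csInf_eq (a := lam) ⟨⟨w, hw, hw1, hwE.symm⟩, ?_⟩)
  rintro t ⟨u, hu, hu1, rfl⟩
  have hle := heig.mul_integral_le_gagE hp hvpos hh hu
    (.of_integral_ne_zero (hu1.trans_ne one_ne_zero))
  rwa [hu1, mul_one] at hle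

/-- for `h ∈ W̃_p` with `|{h > 0} ∩ Ω| > 0`, if `v` is a bounded eigenfunction
with eigenvalue `λ`, `v > 0` a.e. in `Ω` and `∫_Ω h v^p > 0`, then `λ = λ₁`. -/
theorem stmt11 (N : ℕ) (Ω : Set (EuclideanSpace ℝ (Fin N)))
    (hΩo : IsOpen Ω) (hΩc : IsConnected Ω) (hΩb : Bornology.IsBounded Ω)
    (s p : ℝ) (hs0 : 0 < s) (hs1 : s ≤ 1) (hp : 1 < p)
    (h : EuclideanSpace ℝ (Fin N) → ℝ) (hmeas : Measurable h)
    (hW : inWtq N Ω s p p h)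
    (hpos : 0 < volume {x ∈ Ω | 0 < h x})
    (lam : ℝ) (v : EuclideanSpace ℝ (Fin N) → ℝ)
    (heig : isEigenpair N s p Ω h lam v)
    (hbdd : ∃ M : ℝ, ∀ᵐ x ∂volume.restrict Ω, |v x| ≤ M)
    (hvpos : ∀ᵐ x ∂volume.restrict Ω, 0 < v x)
    (hint : 0 < ∫ x in Ω, h x * v x ^ p) :
    lam = lam1 N s p Ω h := by
  exact stmt11_general hp heig hvpos hint

end
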